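/- Let G be a 3-regular graph with n vertices and m = 3n/2 edges, and let (P, 𝒟) be the Euclidean PCSF instance constructed from G, with parameters U = 10000(n+m), H = 10U, V = 100U, and Z the set of grid points z_{x,y} of P. If G has a vertex cover of size k, then the instance has a solution (a forest with vertex set contained in P, edges weighted by Euclidean distance) of cost at most |Z| + (2m + 2n + k)U. -/

import Mathlib

/-!
The solution lets the cover `C` pay: every `a_i` with `i ∉ C` is joined to the grid, and every
`a_i` with `i ∈ C` is left isolated, at the price of the penalties of its three demands.

The grid `Z` is spanned by joining each of its points to a neighbour closer to the origin
(`par`), which costs at most `|Z|`. For `i ∉ C` the segment from `(H, iV)` to `a_i` costs `2U`.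
For each edge `e_j`, the point `b_j` is joined to the grid through one of `c¹_j`, `c²_j`, which
costs `2U`; since `C` is a cover, at most one endpoint of `e_j` lies outside `C`, and the point
`c^ℓ_j` can be chosen to belong to that endpoint. So every demand `{a_i, c^ℓ_j}` with `i ∉ C` is
satisfied (`reach_first`, `reach_second`), all demands `{(0,0), b_j}` are satisfied (`reach_b`),
and at most `3k` demands, each of penalty less than `U`, are not (`count_cover`). No unit demand
is violated, because adjacent points of `P` lie on the grid (`ZI_of_horizontal`,
`ZI_of_vertical`). The total is at most
`|Z| + 2(n - k)U + 2mU + 3kU = |Z| + (2m + 2n + k)U`.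

The segments form the graph `sol`; acyclicity is obtained by passing to a spanning forest of
`sol`, which has the same connected components and whose total length is not larger.
-/

open scoped Classical

noncomputable section

namespace EucPCSF

/-- The Euclidean plane. -/
abbrev E2 := EuclideanSpace ℝ (Fin 2)

/-- The point `(a, b)` of the Euclidean plane. -/
def pt (a b : ℝ) : E2 := (WithLp.equiv 2 (Fin 2 → ℝ)).symm ![a, b]

/-- The basic unit of cost `U := 10000(n + m)`. -/
def U (n m : ℕ) : ℝ := 10000 * ((n : ℝ) + (m : ℝ))

/-- The horizontal length `H := 10U`. -/
def Hc (n m : ℕ) : ℝ := 10 * U n m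

/-- The vertical spacing `V := 100U`. -/
def Vc (n m : ℕ) : ℝ := 100 * U n m

/-- The set `Z` of grid points `z_{x,y}`. -/
def Zset (n m : ℕ) : Set E2 :=
  {p | ∃ y : ℤ, -((m : ℝ) * Vc n m) ≤ (y : ℝ) ∧ (y : ℝ) ≤ (n : ℝ) * Vc n m ∧
        p = pt 0 (y : ℝ)} ∪
  {p | ∃ (x : ℤ) (i : Fin n), 0 ≤ (x : ℝ) ∧ (x : ℝ) ≤ Hc n m ∧
        p = pt (x : ℝ) (((i : ℕ) + 1 : ℝ) * Vc n m)} ∪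
  {p | ∃ (x : ℤ) (j : Fin m), 0 ≤ (x : ℝ) ∧ (x : ℝ) ≤ Hc n m ∧
        (p = pt (x : ℝ) (-(((j : ℕ) + 1 : ℝ) * Vc n m)) ∨
         p = pt (x : ℝ) (-(((j : ℕ) + 1 : ℝ) * Vc n m) + 4 * U n m))}

/-- The point `a_i := (H + 2U, iV)`. -/
def ap (n m : ℕ) (i : Fin n) : E2 :=
  pt (Hc n m + 2 * U n m) (((i : ℕ) + 1 : ℝ) * Vc n m)

/-- The point `b_j := (H, −jV + 2U)`. -/
def bp (n m : ℕ) (j : Fin m) : E2 :=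
  pt (Hc n m) (-(((j : ℕ) + 1 : ℝ) * Vc n m) + 2 * U n m)

/-- The point `c¹_j := (H, −jV + U)`. -/
def c1p (n m : ℕ) (j : Fin m) : E2 :=
  pt (Hc n m) (-(((j : ℕ) + 1 : ℝ) * Vc n m) + U n m)

/-- The point `c²_j := (H, −jV + 3U)`. -/
def c2p (n m : ℕ) (j : Fin m) : E2 :=
  pt (Hc n m) (-(((j : ℕ) + 1 : ℝ) * Vc n m) + 3 * U n m)

/-- The point set `P` of the Euclidean PCSF instance. -/
def Pset (n m : ℕ) : Set E2 :=
  Zset n m ∪ Set.range (ap n m) ∪ Set.range (bp n m) ∪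
    Set.range (c1p n m) ∪ Set.range (c2p n m)

/-- The Euclidean length of an (unordered) edge of the plane. -/
def elen : Sym2 E2 → ℝ :=
  Sym2.lift ⟨fun p q => dist p q, fun p q => dist_comm p q⟩

/-- Total Euclidean edge length of a graph on points of the plane. -/
def flen (F : SimpleGraph E2) : ℝ := ∑ᶠ e ∈ F.edgeSet, elen e

/-- The cost of a solution `F` of the Euclidean PCSF instance:
total edge length, plus penalty `1` for every pair of horizontally or vertically
adjacent points of `P` not connected in `F`, plus penalty `3U` for every
unconnected demand `{(0,0), b_j}`, plus penalty `U − 10` for every unconnected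
demand `{a_i, c^ℓ_j}` with `v_i = e_j^{(ℓ)}`. -/
def ecost (n m : ℕ) (ends : Fin m → Fin n × Fin n) (F : SimpleGraph E2) : ℝ :=
  flen F
    + (∑ᶠ (x : ℤ) (y : ℤ),
        if pt (x : ℝ) (y : ℝ) ∈ Pset n m ∧ pt ((x : ℝ) + 1) (y : ℝ) ∈ Pset n m ∧
            ¬ F.Reachable (pt (x : ℝ) (y : ℝ)) (pt ((x : ℝ) + 1) (y : ℝ))
        then (1 : ℝ) else 0)
    + (∑ᶠ (x : ℤ) (y : ℤ),
        if pt (x : ℝ) (y : ℝ) ∈ Pset n m ∧ pt (x : ℝ) ((y : ℝ) + 1) ∈ Pset n m ∧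
            ¬ F.Reachable (pt (x : ℝ) (y : ℝ)) (pt (x : ℝ) ((y : ℝ) + 1))
        then (1 : ℝ) else 0)
    + (∑ j : Fin m, if F.Reachable (pt 0 0) (bp n m j) then 0 else 3 * U n m)
    + (∑ j : Fin m,
        if F.Reachable (ap n m (ends j).1) (c1p n m j) then 0 else U n m - 10)
    + (∑ j : Fin m,
        if F.Reachable (ap n m (ends j).2) (c2p n m j) then 0 else U n m - 10)

end EucPCSF

namespace EucPCSF

/-! ### Integer coordinates -/

/-- The basic unit `U` as an integer. -/
def u (n m : ℕ) : ℤ := 10000 * ((n : ℤ) + (m : ℤ))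

/-- The grid `Z` in integer coordinates: `(x, y)` lies on the vertical line `x = 0`, or on the
horizontal segment of a vertex, or on one of the two horizontal segments of an edge. -/
def ZI (n m : ℕ) (x y : ℤ) : Prop :=
  (x = 0 ∧ -((m : ℤ) * (100 * u n m)) ≤ y ∧ y ≤ (n : ℤ) * (100 * u n m)) ∨
  (∃ i : Fin n, 0 ≤ x ∧ x ≤ 10 * u n m ∧ y = ((i : ℕ) + 1 : ℤ) * (100 * u n m)) ∨
  (∃ j : Fin m, 0 ≤ x ∧ x ≤ 10 * u n m ∧
    (y = -(((j : ℕ) + 1 : ℤ) * (100 * u n m)) ∨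
      y = -(((j : ℕ) + 1 : ℤ) * (100 * u n m)) + 4 * u n m))

lemma U_eq (n m : ℕ) : U n m = (u n m : ℝ) := by
  simp [U, u]

lemma u_nonneg (n m : ℕ) : 0 ≤ u n m := by unfold u; positivity

lemma U_nonneg (n m : ℕ) : 0 ≤ U n m := by unfold U; positivity

lemma u_pos_left {n m : ℕ} (i : Fin n) : 2 ≤ u n m := by
  have := i.2
  unfold u; omega

lemma u_pos_right {n m : ℕ} (j : Fin m) : 2 ≤ u n m := by
  have := j.2
  unfold u; omega

lemma pt_inj {a b c d : ℝ} : pt a b = pt c d ↔ a = c ∧ b = d := by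
  simp [pt]

@[simp] lemma pt_zero (a b : ℝ) : pt a b 0 = a := by simp [pt]

@[simp] lemma pt_one (a b : ℝ) : pt a b 1 = b := by simp [pt]

lemma dist_pt (a b c d : ℝ) : dist (pt a b) (pt c d) = √((a - c) ^ 2 + (b - d) ^ 2) := by
  rw [EuclideanSpace.dist_eq]
  simp [Real.dist_eq, sq_abs]

lemma dist_pt_fst (a b c : ℝ) : dist (pt a b) (pt c b) = |a - c| := by
  simp [dist_pt, Real.sqrt_sq_eq_abs]

lemma dist_pt_snd (a b d : ℝ) : dist (pt a b) (pt a d) = |b - d| := by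
  simp [dist_pt, Real.sqrt_sq_eq_abs]

lemma pt_mem_Zset {n m : ℕ} {x y : ℤ} : pt (x : ℝ) (y : ℝ) ∈ Zset n m ↔ ZI n m x y := by
  unfold Zset ZI Hc Vc
  simp only [U_eq, Set.mem_union, Set.mem_ofPred_eq, pt_inj, or_assoc]
  refine or_congr ?_ (or_congr ?_ ?_)
  · constructor
    · rintro ⟨y', h1, h2, h3, h4⟩
      have h3 : x = 0 := by exact_mod_cast h3
      have h4 : y = y' := by exact_mod_cast h4
      subst h4
      exact ⟨h3, by exact_mod_cast h1, by exact_mod_cast h2⟩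
    · rintro ⟨h1, h2, h3⟩
      exact ⟨y, by exact_mod_cast h2, by exact_mod_cast h3, by exact_mod_cast h1, rfl⟩
  · constructor
    · rintro ⟨x', i, h1, h2, h3, h4⟩
      have h3 : x = x' := by exact_mod_cast h3
      subst h3
      exact ⟨i, by exact_mod_cast h1, by exact_mod_cast h2, by exact_mod_cast h4⟩
    · rintro ⟨i, h1, h2, h3⟩
      exact ⟨x, i, by exact_mod_cast h1, by exact_mod_cast h2, rfl, by exact_mod_cast h3⟩
  · constructor
    · rintro ⟨x', j, h1, h2, ⟨h3, h4⟩ | ⟨h3, h4⟩⟩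
      all_goals
        have h3 : x = x' := by exact_mod_cast h3
        subst h3
      · exact ⟨j, by exact_mod_cast h1, by exact_mod_cast h2, Or.inl (by exact_mod_cast h4)⟩
      · exact ⟨j, by exact_mod_cast h1, by exact_mod_cast h2, Or.inr (by exact_mod_cast h4)⟩
    · rintro ⟨j, h1, h2, h3 | h3⟩
      · exact ⟨x, j, by exact_mod_cast h1, by exact_mod_cast h2,
          Or.inl ⟨rfl, by exact_mod_cast h3⟩⟩
      · exact ⟨x, j, by exact_mod_cast h1, by exact_mod_cast h2,
          Or.inr ⟨rfl, by exact_mod_cast h3⟩⟩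

lemma exists_of_mem_Zset {n m : ℕ} {p : E2} (hp : p ∈ Zset n m) :
    ∃ x y : ℤ, ZI n m x y ∧ p = pt (x : ℝ) (y : ℝ) := by
  suffices h : ∃ x y : ℤ, p = pt (x : ℝ) (y : ℝ) by
    obtain ⟨x, y, rfl⟩ := h
    exact ⟨x, y, pt_mem_Zset.1 hp, rfl⟩
  unfold Zset Vc at hp
  simp only [U_eq, Set.mem_union, Set.mem_ofPred_eq] at hp
  rcases hp with (⟨y, -, -, rfl⟩ | ⟨x, i, -, -, rfl⟩) | ⟨x, j, -, -, rfl | rfl⟩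
  · exact ⟨0, y, by simp⟩
  · exact ⟨x, ((i : ℕ) + 1) * (100 * u n m), by push_cast; rfl⟩
  · exact ⟨x, -(((j : ℕ) + 1) * (100 * u n m)), by push_cast; rfl⟩
  · exact ⟨x, -(((j : ℕ) + 1) * (100 * u n m)) + 4 * u n m, by push_cast; rfl⟩

lemma ZI.nonneg {n m : ℕ} {x y : ℤ} (h : ZI n m x y) : 0 ≤ x := by
  rcases h with ⟨h, -⟩ | ⟨i, h, -⟩ | ⟨j, h, -⟩ <;> omega

lemma ZI.le {n m : ℕ} {x y : ℤ} (h : ZI n m x y) : x ≤ 10 * u n m := by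
  have := u_nonneg n m
  rcases h with ⟨h, -⟩ | ⟨i, _, h, -⟩ | ⟨j, _, h, -⟩ <;> omega

lemma ZI.bounds {n m : ℕ} {x y : ℤ} (h : ZI n m x y) :
    -((m : ℤ) * (100 * u n m)) ≤ y ∧ y ≤ (n : ℤ) * (100 * u n m) := by
  have hu := u_nonneg n m
  rcases h with ⟨-, h⟩ | ⟨i, _, _, rfl⟩ | ⟨j, _, _, h⟩
  · exact h
  · have : ((i : ℕ) : ℤ) + 1 ≤ n := by have := i.2; omega
    constructor <;> nlinarith
  · have : ((j : ℕ) : ℤ) + 1 ≤ m := by have := j.2; omega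
    have h0 : (0 : ℤ) ≤ (j : ℕ) := by positivity
    have h1 : (0 : ℤ) ≤ (j : ℕ) * u n m := by positivity
    have h2 : (0 : ℤ) ≤ n * u n m := by positivity
    rcases h with rfl | rfl <;> constructor <;> nlinarith

/-- The vertical line contains the left ends of all horizontal segments. -/
lemma ZI.zero_iff {n m : ℕ} {y : ℤ} : ZI n m 0 y ↔
    -((m : ℤ) * (100 * u n m)) ≤ y ∧ y ≤ (n : ℤ) * (100 * u n m) :=
  ⟨ZI.bounds, fun h => Or.inl ⟨rfl, h⟩⟩

lemma ZI.left {n m : ℕ} {x y : ℤ} (h : ZI n m x y) (hx : 0 < x) : ZI n m (x - 1) y := by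
  rcases h with ⟨h, -⟩ | ⟨i, h1, h2, h3⟩ | ⟨j, h1, h2, h3⟩
  · omega
  · exact Or.inr (Or.inl ⟨i, by omega, by omega, h3⟩)
  · exact Or.inr (Or.inr ⟨j, by omega, by omega, h3⟩)

lemma ZI.down {n m : ℕ} {y : ℤ} (h : ZI n m 0 y) (hy : 0 < y) : ZI n m 0 (y - 1) := by
  rw [ZI.zero_iff] at *
  have hu := u_nonneg n m
  have : (0 : ℤ) ≤ (m : ℤ) * (100 * u n m) := by positivity
  omega

lemma ZI.up {n m : ℕ} {y : ℤ} (h : ZI n m 0 y) (hy : y < 0) : ZI n m 0 (y + 1) := by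
  rw [ZI.zero_iff] at *
  have hu := u_nonneg n m
  have : (0 : ℤ) ≤ (n : ℤ) * (100 * u n m) := by positivity
  omega

lemma Zset_finite (n m : ℕ) : (Zset n m).Finite := by
  refine (((Set.finite_Icc (0 : ℤ) (10 * u n m)).prod (Set.finite_Icc
    (-((m : ℤ) * (100 * u n m))) ((n : ℤ) * (100 * u n m)))).image
      fun q : ℤ × ℤ => pt (q.1 : ℝ) (q.2 : ℝ)).subset ?_
  intro p hp
  obtain ⟨x, y, h, rfl⟩ := exists_of_mem_Zset hp
  exact ⟨(x, y), ⟨⟨h.nonneg, h.le⟩, h.bounds⟩, rfl⟩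

/-- Off the line `x = 0`, the ordinate of a grid point is `U` times an integer congruent to
`0` or `4` modulo `100`. -/
lemma ZI.exists_mul {n m : ℕ} {x y : ℤ} (h : ZI n m x y) (hx : x ≠ 0) :
    2 ≤ u n m ∧ ∃ t : ℤ, y = t * u n m ∧ (t % 100 = 0 ∨ t % 100 = 4) := by
  rcases h with ⟨h, -⟩ | ⟨i, -, -, rfl⟩ | ⟨j, -, -, rfl | rfl⟩
  · exact absurd h hx
  · exact ⟨u_pos_left i, (i + 1) * 100, by ring, by omega⟩
  · exact ⟨u_pos_right j, -(j + 1) * 100, by ring, by omega⟩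
  · exact ⟨u_pos_right j, -(j + 1) * 100 + 4, by ring, by omega⟩

/-- An integer point of `P` lies on the grid, or it is one of the `a_i`, or it is one of the
`b_j`, `c¹_j`, `c²_j`; in the last two cases its ordinate is a multiple of `U`, with residue
`1`, `2` or `3` modulo `100` in the last case. -/
lemma mem_Pset_cases {n m : ℕ} {x y : ℤ} (h : pt (x : ℝ) (y : ℝ) ∈ Pset n m) :
    ZI n m x y ∨ (2 ≤ u n m ∧ ∃ t : ℤ, y = t * u n m ∧
      (x = 12 * u n m ∨ x = 10 * u n m ∧ (t % 100 = 1 ∨ t % 100 = 2 ∨ t % 100 = 3))) := by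
  unfold Pset ap bp c1p c2p Hc Vc at h
  simp only [U_eq, Set.mem_union, Set.mem_range, pt_inj, or_assoc] at h
  rcases h with h | ⟨i, h1, h2⟩ | ⟨j, h1, h2⟩ | ⟨j, h1, h2⟩ | ⟨j, h1, h2⟩
  · exact Or.inl (pt_mem_Zset.1 h)
  · right
    have h1 : 10 * u n m + 2 * u n m = x := by exact_mod_cast h1
    have h2 : ((i : ℕ) + 1 : ℤ) * (100 * u n m) = y := by exact_mod_cast h2
    exact ⟨u_pos_left i, (i + 1) * 100, by rw [← h2]; ring, Or.inl (by omega)⟩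
  · right
    have h1 : 10 * u n m = x := by exact_mod_cast h1
    have h2 : -(((j : ℕ) + 1 : ℤ) * (100 * u n m)) + 2 * u n m = y := by exact_mod_cast h2
    exact ⟨u_pos_right j, -(j + 1) * 100 + 2, by rw [← h2]; ring, Or.inr ⟨h1.symm, by omega⟩⟩
  · right
    have h1 : 10 * u n m = x := by exact_mod_cast h1
    have h2 : -(((j : ℕ) + 1 : ℤ) * (100 * u n m)) + u n m = y := by exact_mod_cast h2
    exact ⟨u_pos_right j, -(j + 1) * 100 + 1, by rw [← h2]; ring, Or.inr ⟨h1.symm, by omega⟩⟩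
  · right
    have h1 : 10 * u n m = x := by exact_mod_cast h1
    have h2 : -(((j : ℕ) + 1 : ℤ) * (100 * u n m)) + 3 * u n m = y := by exact_mod_cast h2
    exact ⟨u_pos_right j, -(j + 1) * 100 + 3, by rw [← h2]; ring, Or.inr ⟨h1.symm, by omega⟩⟩

/-- Horizontally adjacent points of `P` belong to the grid. -/
lemma ZI_of_horizontal {n m : ℕ} {x y : ℤ} (h : pt (x : ℝ) (y : ℝ) ∈ Pset n m)
    (h' : pt ((x : ℝ) + 1) (y : ℝ) ∈ Pset n m) : ZI n m x y ∧ ZI n m (x + 1) y := by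
  have h' : pt ((x + 1 : ℤ) : ℝ) (y : ℝ) ∈ Pset n m := by push_cast; exact h'
  rcases mem_Pset_cases h with h1 | ⟨hu, t, ht, hx⟩ <;>
    rcases mem_Pset_cases h' with h2 | ⟨hu', t', ht', hx'⟩
  · exact ⟨h1, h2⟩
  · -- the right point would be `b_j` or `c_j`, at a height where no segment of the grid lies
    exfalso
    have := h1.le
    obtain ⟨-, s, hs, hs'⟩ := h1.exists_mul (by omega)
    have : s = t' := mul_right_cancel₀ (by omega : u n m ≠ 0) (hs.symm.trans ht')
    omega
  · have := h2.le
    omega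
  · omega

/-- Vertically adjacent points of `P` belong to the grid, because off the line `x = 0` all
ordinates are multiples of `U`. -/
lemma ZI_of_vertical {n m : ℕ} {x y : ℤ} (h : pt (x : ℝ) (y : ℝ) ∈ Pset n m)
    (h' : pt (x : ℝ) ((y : ℝ) + 1) ∈ Pset n m) : ZI n m x y ∧ ZI n m x (y + 1) := by
  have h' : pt (x : ℝ) ((y + 1 : ℤ) : ℝ) ∈ Pset n m := by push_cast; exact h'
  have key : ∀ t t' : ℤ, 2 ≤ u n m → y = t * u n m → y + 1 = t' * u n m → False := by
    intro t t' hu ht ht'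
    have h1 : (t' - t) * u n m = 1 := by linarith
    have := Int.eq_one_or_neg_one_of_mul_eq_one' h1
    omega
  rcases mem_Pset_cases h with h1 | ⟨hu, t, ht, hx⟩ <;>
    rcases mem_Pset_cases h' with h2 | ⟨hu', t', ht', hx'⟩
  · exact ⟨h1, h2⟩
  · obtain ⟨-, s, hs, -⟩ := h1.exists_mul (by omega)
    exact (key s t' hu' hs ht').elim
  · obtain ⟨-, s, hs, -⟩ := h2.exists_mul (by omega)
    exact (key t s hu ht hs).elim
  · exact (key t t' hu ht ht').elim

/-! ### Spanning the grid -/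

/-- The parent of a grid point in a spanning tree rooted at the origin: one step to the left on
a horizontal segment, one step towards the origin on the line `x = 0`. The origin is its own
parent. -/
def par (p : E2) : E2 :=
  if 0 < p 0 then pt (p 0 - 1) (p 1)
  else if 0 < p 1 then pt (p 0) (p 1 - 1)
  else if p 1 < 0 then pt (p 0) (p 1 + 1)
  else p

lemma eq_pt (p : E2) : p = pt (p 0) (p 1) := by
  ext i; fin_cases i <;> simp

lemma dist_par_le (p : E2) : dist p (par p) ≤ 1 := by
  unfold par
  split_ifs
  · conv_lhs => rw [eq_pt p]
    simp [dist_pt_fst]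
  · conv_lhs => rw [eq_pt p]
    simp [dist_pt_snd]
  · conv_lhs => rw [eq_pt p]
    simp [dist_pt_snd]
  · simp

lemma par_mem {n m : ℕ} {p : E2} (hp : p ∈ Zset n m) : par p ∈ Zset n m := by
  obtain ⟨x, y, h, rfl⟩ := exists_of_mem_Zset hp
  unfold par
  simp only [pt_zero, pt_one]
  split_ifs with h1 h2 h3
  · have := h.left (by exact_mod_cast h1)
    rw [← pt_mem_Zset] at this
    exact_mod_cast this
  all_goals
    have h1 : ¬ 0 < x := by exact_mod_cast h1
    obtain rfl : x = 0 := by have := h.nonneg; omega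
  · have := h.down (by exact_mod_cast h2)
    rw [← pt_mem_Zset] at this
    exact_mod_cast this
  · have := h.up (by exact_mod_cast h3)
    rw [← pt_mem_Zset] at this
    exact_mod_cast this
  · exact hp

/-- If every grid point is joined to its parent, then every grid point is joined to the
origin. -/
lemma reachable_grid {n m : ℕ} {F : SimpleGraph E2}
    (hF : ∀ p ∈ Zset n m, F.Reachable (par p) p) {x y : ℤ} (h : ZI n m x y) :
    F.Reachable (pt 0 0) (pt (x : ℝ) (y : ℝ)) := by
  induction hN : x.natAbs + y.natAbs generalizing x y with
  | zero =>
    obtain rfl : x = 0 := by omega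
    obtain rfl : y = 0 := by omega
    simp
  | succ N ih =>
    have hp := hF _ (pt_mem_Zset.2 h)
    refine SimpleGraph.Reachable.trans ?_ hp
    have hx0 := h.nonneg
    unfold par
    simp only [pt_zero, pt_one]
    split_ifs with h1 h2 h3
    · have h1 : 0 < x := by exact_mod_cast h1
      have := ih (h.left h1) (by omega)
      exact_mod_cast this
    all_goals
      have h1 : ¬ 0 < x := by exact_mod_cast h1
      obtain rfl : x = 0 := by omega
    · have h2 : 0 < y := by exact_mod_cast h2
      have := ih (h.down h2) (by omega)
      exact_mod_cast this
    · have h3 : y < 0 := by exact_mod_cast h3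
      have := ih (h.up h3) (by omega)
      exact_mod_cast this
    · have h2 : ¬ 0 < y := by exact_mod_cast h2
      have h3 : ¬ y < 0 := by exact_mod_cast h3
      omega

/-! ### Length of a graph given by a family of segments -/

/-- A graph whose edges are among the segments `f i – g i` has length at most their total
length. -/
lemma flen_le {ι : Type*} [Fintype ι] (f g : ι → E2) (F : SimpleGraph E2)
    (hF : F.edgeSet ⊆ Set.range fun i => s(f i, g i)) :
    flen F ≤ ∑ i, dist (f i) (g i) := by
  have h0 : ∀ e, 0 ≤ elen e := fun e => by
    induction e with | _ p q => exact dist_nonneg (x := p) (y := q)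
  have hfin : F.edgeSet.Finite := (Set.finite_range _).subset hF
  unfold flen
  rw [finsum_mem_eq_finite_toFinset_sum _ hfin]
  calc ∑ e ∈ hfin.toFinset, elen e
      ≤ ∑ e ∈ Finset.univ.image (fun i => s(f i, g i)), elen e := by
        refine Finset.sum_le_sum_of_subset_of_nonneg ?_ fun _ _ _ => h0 _
        intro e he
        obtain ⟨i, hi⟩ := hF (hfin.mem_toFinset.1 he)
        exact Finset.mem_image.2 ⟨i, Finset.mem_univ _, hi⟩
    _ ≤ ∑ i, elen s(f i, g i) :=
        Finset.sum_image_le_of_nonneg fun _ _ => h0 _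
    _ = ∑ i, dist (f i) (g i) := rfl

/-! ### The graph of the solution -/

/-- Index set of the segments of the solution attached to a vertex cover `C`: one per grid point
(leading to its parent), one per vertex outside `C` (leading to `a_i`), and two per edge (one
leading from the grid to `c^ℓ_j`, one from `c^ℓ_j` to `b_j`). -/
abbrev Idx (n m : ℕ) (C : Finset (Fin n)) : Type :=
  (Zset n m) ⊕ ({i : Fin n // i ∉ C} ⊕ (Fin m ⊕ Fin m))

variable {n m : ℕ} (ends : Fin m → Fin n × Fin n) (C : Finset (Fin n))

/-- The point `c^ℓ_j` used for the edge `e_j`: `ℓ = 1` if the first endpoint of `e_j` lies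
outside `C`, and `ℓ = 2` otherwise. -/
def cpt (j : Fin m) : E2 := if (ends j).1 ∈ C then c2p n m j else c1p n m j

/-- The grid point at distance `U` from `cpt ends C j`. -/
def corner (n m : ℕ) (ends : Fin m → Fin n × Fin n) (C : Finset (Fin n)) (j : Fin m) : E2 :=
  if (ends j).1 ∈ C then pt (Hc n m) (-(((j : ℕ) + 1 : ℝ) * Vc n m) + 4 * U n m)
  else pt (Hc n m) (-(((j : ℕ) + 1 : ℝ) * Vc n m))

/-- The grid point at distance `2U` from `a_i`. -/
def vend (n m : ℕ) (i : Fin n) : E2 := pt (Hc n m) (((i : ℕ) + 1 : ℝ) * Vc n m)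

/-- The end of each segment of the solution that is farther from the origin in the tree. -/
def far : Idx n m C → E2 :=
  Sum.elim (fun z => z) (Sum.elim (fun i => ap n m i) (Sum.elim (cpt ends C) (bp n m)))

/-- The end of each segment of the solution that is closer to the origin in the tree. -/
def near : Idx n m C → E2 :=
  Sum.elim (fun z => par z) (Sum.elim (fun i => vend n m i)
    (Sum.elim (corner n m ends C) (cpt ends C)))

/-- The union of all the segments. -/
def sol : SimpleGraph E2 :=
  SimpleGraph.fromEdgeSet (Set.range fun i => s(far ends C i, near ends C i))

lemma vend_mem (i : Fin n) : vend n m i ∈ Zset n m := by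
  refine Or.inl (Or.inr ⟨10 * u n m, i, ?_, ?_, ?_⟩)
  · exact_mod_cast mul_nonneg (by norm_num) (u_nonneg n m)
  · simp [Hc, U_eq]
  · simp [vend, Hc, U_eq]

lemma corner_mem (j : Fin m) : corner n m ends C j ∈ Zset n m := by
  refine Or.inr ⟨10 * u n m, j, ?_, ?_, ?_⟩
  · exact_mod_cast mul_nonneg (by norm_num) (u_nonneg n m)
  · simp [Hc, U_eq]
  · unfold corner
    split_ifs
    · right; simp [Hc, U_eq]
    · left; simp [Hc, U_eq]

lemma Zset_sub {p : E2} (h : p ∈ Zset n m) : p ∈ Pset n m :=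
  Or.inl (Or.inl (Or.inl (Or.inl h)))

lemma cpt_mem (j : Fin m) : cpt ends C j ∈ Pset n m := by
  unfold cpt
  split_ifs
  · exact Or.inr ⟨j, rfl⟩
  · exact Or.inl (Or.inr ⟨j, rfl⟩)

lemma far_mem (i : Idx n m C) : far ends C i ∈ Pset n m := by
  rcases i with z | i | j | j
  · exact Zset_sub z.2
  · exact Or.inl (Or.inl (Or.inl (Or.inr ⟨i, rfl⟩)))
  · exact cpt_mem ends C j
  · exact Or.inl (Or.inl (Or.inr ⟨j, rfl⟩))

lemma near_mem (i : Idx n m C) : near ends C i ∈ Pset n m := by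
  rcases i with z | i | j | j
  · exact Zset_sub (par_mem z.2)
  · have h := vend_mem (m := m) (i : Fin n)
    exact Zset_sub h
  · exact Zset_sub (corner_mem ends C j)
  · exact cpt_mem ends C j

lemma sol_support : (sol ends C).support ⊆ Pset n m := by
  rintro p ⟨q, h⟩
  obtain ⟨⟨i, hi⟩, -⟩ := h
  rcases Sym2.eq_iff.1 hi with ⟨h, -⟩ | ⟨-, h⟩
  · exact h ▸ far_mem ends C i
  · exact h ▸ near_mem ends C i

lemma reach (i : Idx n m C) : (sol ends C).Reachable (near ends C i) (far ends C i) := by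
  by_cases h : near ends C i = far ends C i
  · rw [h]
  · exact SimpleGraph.Adj.reachable ⟨⟨i, Sym2.eq_swap⟩, h⟩

lemma reach_ZI {x y : ℤ} (h : ZI n m x y) :
    (sol ends C).Reachable (pt 0 0) (pt (x : ℝ) (y : ℝ)) :=
  reachable_grid (n := n) (m := m)
    (fun p hp => reach ends C (Sum.inl (⟨p, hp⟩ : Zset n m))) h

lemma reach_Z {p : E2} (h : p ∈ Zset n m) : (sol ends C).Reachable (pt 0 0) p := by
  obtain ⟨x, y, hxy, rfl⟩ := exists_of_mem_Zset h
  exact reach_ZI ends C hxy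

lemma reach_a {i : Fin n} (hi : i ∉ C) : (sol ends C).Reachable (pt 0 0) (ap n m i) :=
  (reach_Z ends C (vend_mem i)).trans (reach ends C (Sum.inr (Sum.inl ⟨i, hi⟩)))

lemma reach_c (j : Fin m) : (sol ends C).Reachable (pt 0 0) (cpt ends C j) :=
  (reach_Z ends C (corner_mem ends C j)).trans
    (reach ends C (Sum.inr (Sum.inr (Sum.inl j))))

lemma reach_b (j : Fin m) : (sol ends C).Reachable (pt 0 0) (bp n m j) :=
  (reach_c ends C j).trans (reach ends C (Sum.inr (Sum.inr (Sum.inr j))))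

/-- If the first endpoint of `e_j` lies outside the cover, its demand is satisfied. -/
lemma reach_first {j : Fin m} (h : (ends j).1 ∉ C) :
    (sol ends C).Reachable (ap n m (ends j).1) (c1p n m j) := by
  have := reach_c ends C j
  rw [cpt, if_neg h] at this
  exact (reach_a ends C h).symm.trans this

/-- If the second endpoint of `e_j` lies outside the cover, then the first lies in the cover, so
`c²_j` is the point used, and the demand of the second endpoint is satisfied. -/
lemma reach_second {j : Fin m} (hj : (ends j).1 ∈ C ∨ (ends j).2 ∈ C) (h : (ends j).2 ∉ C) :
    (sol ends C).Reachable (ap n m (ends j).2) (c2p n m j) := by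
  have := reach_c ends C j
  rw [cpt, if_pos (hj.resolve_right h)] at this
  exact (reach_a ends C h).symm.trans this

lemma dist_a (i : Fin n) : dist (ap n m i) (vend n m i) = 2 * U n m := by
  have := U_nonneg n m
  rw [ap, vend, dist_pt_fst, add_sub_cancel_left, abs_of_nonneg (by positivity)]

lemma dist_c (j : Fin m) : dist (cpt ends C j) (corner n m ends C j) = U n m := by
  have := U_nonneg n m
  unfold cpt corner
  split_ifs
  · rw [c2p, dist_pt_snd, show ∀ t : ℝ, t + 3 * U n m - (t + 4 * U n m) = -U n m by intro t; ring,
      abs_neg, abs_of_nonneg this]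
  · rw [c1p, dist_pt_snd, add_sub_cancel_left, abs_of_nonneg this]

lemma dist_b (j : Fin m) : dist (bp n m j) (cpt ends C j) = U n m := by
  have := U_nonneg n m
  unfold cpt
  split_ifs
  · rw [bp, c2p, dist_pt_snd, show ∀ t : ℝ, t + 2 * U n m - (t + 3 * U n m) = -U n m by
      intro t; ring, abs_neg, abs_of_nonneg this]
  · rw [bp, c1p, dist_pt_snd, show ∀ t : ℝ, t + 2 * U n m - (t + U n m) = U n m by intro t; ring,
      abs_of_nonneg this]

lemma flen_sol_le {F : SimpleGraph E2} (hF : F ≤ sol ends C) :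
    flen F ≤ (Nat.card (Zset n m) : ℝ) + 2 * U n m * (n - C.card) + 2 * m * U n m := by
  have : Fintype (Zset n m) := (Zset_finite n m).fintype
  have h := flen_le (far ends C) (near ends C) F (by
    refine (SimpleGraph.edgeSet_mono hF).trans ?_
    unfold sol
    rw [SimpleGraph.edgeSet_fromEdgeSet]
    exact Set.sdiff_subset)
  refine h.trans ?_
  simp only [Fintype.sum_sum_type, far, near, Sum.elim_inl, Sum.elim_inr, dist_a, dist_b, dist_c]
  have hZ : ∑ z : Zset n m, dist (z : E2) (par z) ≤ (Nat.card (Zset n m) : ℝ) := by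
    calc ∑ z : Zset n m, dist (z : E2) (par z) ≤ ∑ _z : Zset n m, (1 : ℝ) :=
          Finset.sum_le_sum fun z _ => dist_par_le (z : E2)
      _ = (Nat.card (Zset n m) : ℝ) := by simp [Nat.card_eq_fintype_card]
  have hc : (Fintype.card {i : Fin n // i ∉ C} : ℝ) = n - C.card := by
    rw [Fintype.card_subtype_compl, Nat.cast_sub (Fintype.card_subtype_le _)]
    simp
  simp only [Finset.sum_const, Finset.card_univ, nsmul_eq_mul, Fintype.card_fin, hc]
  linarith

/-! ### Counting the demands at the vertices of the cover -/

/-- At most three demands belong to each vertex of a 3-regular graph. -/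
lemma count_vertex (G : SimpleGraph (Fin n)) [DecidableRel G.Adj]
    (hreg : G.IsRegularOfDegree 3) (hends : ∀ j, G.Adj (ends j).1 (ends j).2)
    (huniq : ∀ e ∈ G.edgeSet, ∃! j : Fin m, e = s((ends j).1, (ends j).2)) (i : Fin n) :
    ∑ j : Fin m, ((if (ends j).1 = i then (1 : ℝ) else 0) + (if (ends j).2 = i then 1 else 0))
      ≤ 3 := by
  have h1 : ∀ j : Fin m, (if (ends j).1 = i then (1 : ℝ) else 0) +
      (if (ends j).2 = i then 1 else 0) = if (ends j).1 = i ∨ (ends j).2 = i then 1 else 0 := by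
    intro j
    have := (hends j).ne
    split_ifs <;> simp_all
  simp only [h1, Finset.sum_boole]
  have h2 : (Finset.univ.filter fun j : Fin m => (ends j).1 = i ∨ (ends j).2 = i).card ≤ 3 := by
    rw [← hreg i, ← G.card_incidenceFinset_eq_degree i]
    refine Finset.card_le_card_of_injOn (fun j => s((ends j).1, (ends j).2)) ?_ ?_
    · intro j hj
      have hj := (Finset.mem_filter.1 hj).2
      rw [Finset.mem_coe, SimpleGraph.mem_incidenceFinset, SimpleGraph.mk'_mem_incidenceSet_iff]
      exact ⟨hends j, hj.imp Eq.symm Eq.symm⟩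
    · intro j _ j' _ hjj
      exact (huniq _ (hends j)).unique rfl hjj
  exact_mod_cast h2

lemma count_cover (G : SimpleGraph (Fin n)) [DecidableRel G.Adj]
    (hreg : G.IsRegularOfDegree 3) (hends : ∀ j, G.Adj (ends j).1 (ends j).2)
    (huniq : ∀ e ∈ G.edgeSet, ∃! j : Fin m, e = s((ends j).1, (ends j).2)) :
    (∑ j : Fin m, if (ends j).1 ∈ C then (1 : ℝ) else 0) +
      (∑ j : Fin m, if (ends j).2 ∈ C then (1 : ℝ) else 0) ≤ 3 * C.card := by
  have h1 : ∀ v : Fin n, (if v ∈ C then (1 : ℝ) else 0) = ∑ i ∈ C, if v = i then 1 else 0 := by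
    intro v; simp
  simp only [h1]
  rw [← Finset.sum_add_distrib]
  simp only [← Finset.sum_add_distrib]
  rw [Finset.sum_comm]
  refine (Finset.sum_le_sum fun i _ => count_vertex ends G hreg hends huniq i).trans ?_
  simp [mul_comm]

end EucPCSF

open EucPCSF

/--
Let `G` be a 3-regular graph with `n` vertices and `m = 3n/2`
edges, and let `(P, 𝒟)` be the Euclidean PCSF instance constructed from `G`.
If `G` has a vertex cover of size `k`, then the instance has a solution (a forest
with vertex set contained in `P`, edges weighted by Euclidean distance) of cost at
most `|Z| + (2m + 2n + k)U`.
-/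
theorem stmt_11 {n m : ℕ} (hm : 2 * m = 3 * n)
    (G : SimpleGraph (Fin n)) [DecidableRel G.Adj]
    (hreg : G.IsRegularOfDegree 3)
    (ends : Fin m → Fin n × Fin n)
    (hends : ∀ j, G.Adj (ends j).1 (ends j).2)
    (huniq : ∀ e ∈ G.edgeSet, ∃! j : Fin m, e = s((ends j).1, (ends j).2))
    (C : Finset (Fin n)) (hC : ∀ u v : Fin n, G.Adj u v → u ∈ C ∨ v ∈ C)
    (k : ℕ) (hk : C.card = k) :
    ∃ F : SimpleGraph E2, F.IsAcyclic ∧ F.support ⊆ Pset n m ∧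
      ecost n m ends F ≤
        (Nat.card (Zset n m) : ℝ) + (2 * (m : ℝ) + 2 * (n : ℝ) + (k : ℝ)) * U n m := by
  obtain ⟨F, hF, hacyc, hreach⟩ := (sol ends C).exists_isAcyclic_reachable_eq_le
  have hcov : ∀ j, (ends j).1 ∈ C ∨ (ends j).2 ∈ C := fun j => hC _ _ (hends j)
  have hU := U_nonneg n m
  refine ⟨F, hacyc, (SimpleGraph.support_mono hF).trans (sol_support ends C), ?_⟩
  unfold ecost
  rw [hreach]
  rw [finsum_eq_zero_of_forall_eq_zero, finsum_eq_zero_of_forall_eq_zero]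
  rotate_left
  · intro x
    refine finsum_eq_zero_of_forall_eq_zero fun y => if_neg ?_
    rintro ⟨h1, h2, h3⟩
    obtain ⟨h1, h2⟩ := ZI_of_vertical h1 h2
    have := (reach_ZI ends C h1).symm.trans (reach_ZI ends C h2)
    push_cast at this
    exact h3 this
  · intro x
    refine finsum_eq_zero_of_forall_eq_zero fun y => if_neg ?_
    rintro ⟨h1, h2, h3⟩
    obtain ⟨h1, h2⟩ := ZI_of_horizontal h1 h2
    have := (reach_ZI ends C h1).symm.trans (reach_ZI ends C h2)
    push_cast at this
    exact h3 this
  simp only [reach_b, if_true, Finset.sum_const_zero]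
  have hpen1 : (∑ j : Fin m, if (sol ends C).Reachable (ap n m (ends j).1) (c1p n m j)
      then 0 else U n m - 10) ≤ (∑ j : Fin m, if (ends j).1 ∈ C then (1 : ℝ) else 0) * U n m := by
    rw [Finset.sum_mul]
    refine Finset.sum_le_sum fun j _ => ?_
    by_cases h : (ends j).1 ∈ C
    · rw [if_pos h]
      split_ifs <;> linarith
    · rw [if_neg h, if_pos (reach_first ends C h), zero_mul]
  have hpen2 : (∑ j : Fin m, if (sol ends C).Reachable (ap n m (ends j).2) (c2p n m j)
      then 0 else U n m - 10) ≤ (∑ j : Fin m, if (ends j).2 ∈ C then (1 : ℝ) else 0) * U n m := by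
    rw [Finset.sum_mul]
    refine Finset.sum_le_sum fun j _ => ?_
    by_cases h : (ends j).2 ∈ C
    · rw [if_pos h]
      split_ifs <;> linarith
    · rw [if_neg h, if_pos (reach_second ends C (hcov j) h), zero_mul]
  have hlen := flen_sol_le ends C hF
  have hcount := mul_le_mul_of_nonneg_right (count_cover ends C G hreg hends huniq) hU
  rw [hk] at hlen hcount
  linarith
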